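/- Let d ≥ 0, n = 3+d, m < −1, and let a : ℝ × ℝ^{n−1} → ℂ be a symbol of order m with smooth parameters which is compactly supported in the parameter variable w ∈ ℝ^{n−1}. Write y = (y₁, y₂, y₃, y'') ∈ ℝ³ × ℝ^d and define v(y) = ∫_ℝ e^{i y₁ η} a(η, (y₂,y₃,y'')) dη (absolutely convergent since m < −1). Then v ∈ L²(ℝⁿ), and for all real κ, r ≥ 0 with κ + r < −m − 1/2 and all k₂, k₃ ≥ 0, the function ζ ↦ ⟨(ζ₁,ζ'')⟩^{κ} ⟨(ζ₂,ζ'')⟩^{k₂} ⟨(ζ₃,ζ'')⟩^{k₃} ⟨ζ⟩^{r} (𝓕v)(ζ) belongs to L²(ℝⁿ). In particular ⟨ζ⟩^{s}(𝓕v) ∈ L²(ℝⁿ) for every 0 ≤ s < −m − 1/2, i.e. v lies in the Sobolev space H^s(ℝⁿ). -/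

import Mathlib

open MeasureTheory
open scoped RealInnerProductSpace

noncomputable section

/-- Space `ℝⁿ` with `n = 3 + d`, written as `y = (y₁, y₂, y₃, y'')`. -/
abbrev Sp (d : ℕ) : Type := ℝ × ℝ × ℝ × EuclideanSpace ℝ (Fin d)

/-- The parameter space `ℝ^{n-1} = ℝ² × ℝᵈ`. -/
abbrev Par (d : ℕ) : Type := ℝ × ℝ × EuclideanSpace ℝ (Fin d)

/-- A symbol of order `m` with smooth parameters: `a(η, w)` is smooth and every
mixed derivative `∂_w^α ∂_η^β a` is bounded by `C (1+|η|)^{m-β}`. -/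
def IsSymbolP (d : ℕ) (m : ℝ) (a : ℝ × Par d → ℂ) : Prop :=
  ContDiff ℝ (⊤ : ℕ∞) a ∧ ∀ α β : ℕ, ∃ C : ℝ, ∀ (η : ℝ) (w : Par d),
    ‖iteratedFDeriv ℝ α (fun w' => iteratedDeriv β (fun η' => a (η', w')) η) w‖ ≤
      C * (1 + |η|) ^ (m - β)

/-- The Euclidean pairing `⟨y, ζ⟩` on `ℝⁿ = ℝ³ × ℝᵈ`. -/
def pairing (d : ℕ) (y ζ : Sp d) : ℝ :=
  y.1 * ζ.1 + y.2.1 * ζ.2.1 + y.2.2.1 * ζ.2.2.1 + ⟪y.2.2.2, ζ.2.2.2⟫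

/-- The Fourier transform `𝓕v(ζ) = ∫ e^{-i⟨y,ζ⟩} v(y) dy`. -/
def FT (d : ℕ) (v : Sp d → ℂ) (ζ : Sp d) : ℂ :=
  ∫ y : Sp d, Complex.exp (-(Complex.I * (pairing d y ζ : ℂ))) * v y ∂volume

/-- The conormal wave `v(y) = ∫ e^{i y₁ η} a(η, (y₂,y₃,y'')) dη`. -/
def v1 (d : ℕ) (a : ℝ × Par d → ℂ) (y : Sp d) : ℂ :=
  ∫ η : ℝ, Complex.exp (Complex.I * ((y.1 * η : ℝ) : ℂ)) * a (η, (y.2.1, y.2.2.1, y.2.2.2))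

/-! In `y₁` the function `v` is an inverse Fourier transform of `a`, so two integrations by parts
bound it by a multiple of `(1 + |y₁|)⁻²` over the compact parameter support. Hence `v ∈ L¹ ∩ L²`,
and Fubini followed by Fourier inversion in `y₁` gives `𝓕v(ζ) = 2π 𝓕_w[a(ζ₁, ·)](ζ₂, ζ₃, ζ'')`.
This is `O((1 + |ζ₁|)^m)` and decreases rapidly in `(ζ₂, ζ₃, ζ'')` because `a(ζ₁, ·)` is smooth with
compact support. By Peetre's inequality the weights cost `(1 + |ζ₁|)^(κ + r)` and finitely many
powers of `1 + |(ζ₂, ζ₃, ζ'')|`, so all that has to be checked is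
`(1 + |ζ₁|)^(κ + r + m) ∈ L²(ℝ)`. -/

open Real FourierTransform Module

section Integrability

variable {X Y 𝕜 E : Type*} [MeasurableSpace X] [MeasurableSpace Y] [RCLike 𝕜]
  [NormedAddCommGroup E] {μ : Measure X} {ν : Measure Y}

lemma memLp_two_mul_prod {f : X → 𝕜} {g : Y → 𝕜} (hf : MemLp f 2 μ) (hg : MemLp g 2 ν) :
    MemLp (fun z : X × Y => f z.1 * g z.2) 2 (μ.prod ν) := by
  have hfg := hf.aestronglyMeasurable.comp_fst.mul hg.aestronglyMeasurable.comp_snd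
  refine (memLp_two_iff_integrable_sq_norm hfg).2 ?_
  have hf_sq := (memLp_two_iff_integrable_sq_norm hf.aestronglyMeasurable).1 hf
  have hg_sq := (memLp_two_iff_integrable_sq_norm hg.aestronglyMeasurable).1 hg
  exact (hf_sq.mul_prod hg_sq).congr (.of_forall fun z => by simp [mul_pow])

lemma integral_norm_le_of_support_subset {K : Set X} (hK : μ K < ⊤) {f : X → E}
    (hfK : Function.support f ⊆ K) {M : ℝ} (hM : ∀ x, ‖f x‖ ≤ M) :
    ∫ x, ‖f x‖ ∂μ ≤ M * μ.real K := by
  rw [← setIntegral_eq_integral_of_forall_compl_eq_zero (s := K) fun x hx => by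
    rw [Function.notMem_support.1 (mt (@hfK x) hx), norm_zero]]
  refine (le_norm_self _).trans (norm_setIntegral_le_of_norm_le_const hK ?_)
  exact fun x _ => (norm_norm (f x)).trans_le (hM x)

variable {V : Type*} [NormedAddCommGroup V]

lemma continuous_one_add_norm_rpow (t : ℝ) : Continuous fun v : V => (1 + ‖v‖) ^ t :=
  Continuous.rpow_const (by fun_prop) fun v => Or.inl (by positivity)

lemma integrable_one_add_norm_rpow_real {t : ℝ} (ht : t < -1) :
    Integrable fun x : ℝ => (1 + ‖x‖) ^ t := by
  simpa using integrable_one_add_norm (E := ℝ) (μ := volume) (r := -t) (by simpa using by linarith)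

lemma memLp_two_one_add_norm_rpow [NormedSpace ℝ V] [FiniteDimensional ℝ V] [MeasurableSpace V]
    [BorelSpace V] {μ : Measure V} [μ.IsAddHaarMeasure] {t : ℝ} (ht : finrank ℝ V < -2 * t) :
    MemLp (fun v : V => (1 + ‖v‖) ^ t) 2 μ := by
  refine (memLp_two_iff_integrable_sq (continuous_one_add_norm_rpow t).aestronglyMeasurable).2 ?_
  refine (integrable_one_add_norm ht).congr (.of_forall fun v => ?_)
  have hv : 0 ≤ 1 + ‖v‖ := by positivity
  calc (1 + ‖v‖) ^ (-(-2 * t)) = (1 + ‖v‖) ^ (t * (2 : ℕ)) := by congr 1; push_cast; ring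
    _ = ((1 + ‖v‖) ^ t) ^ 2 := rpow_mul_natCast hv t 2

end Integrability

section FourierDecay

variable {V E : Type*} [NormedAddCommGroup V] [NormedSpace ℝ V] [FiniteDimensional ℝ V]
  [MeasurableSpace V] [BorelSpace V] {μ : Measure V} [NormedAddCommGroup E] [NormedSpace ℂ E]
  {L : V →L[ℝ] V →L[ℝ] ℝ}

lemma mul_norm_pow_mul_norm_fourierIntegral_le [μ.IsAddHaarMeasure] {c : ℝ} (hc : 0 ≤ c)
    (hL : ∀ v, c * ‖v‖ * ‖v‖ ≤ L v v) {f : V → E} {N : ℕ} (hf : ContDiff ℝ N f)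
    (hfc : HasCompactSupport f) (ξ : V) :
    (c * ‖ξ‖) ^ N * ‖VectorFourier.fourierIntegral 𝐞 μ L.toLinearMap₁₂ f ξ‖ ≤
      2 ^ N * ∑ n ∈ Finset.range (N + 1), ∫ v, ‖iteratedFDeriv ℝ n f v‖ ∂μ := by
  set F := VectorFourier.fourierIntegral 𝐞 μ L.toLinearMap₁₂ f ξ
  have hint (k n : ℕ) (_ : k ≤ (0 : ℕ∞)) (hn : n ≤ (N : ℕ∞)) :
      Integrable (fun v => ‖v‖ ^ k * ‖iteratedFDeriv ℝ n f v‖) μ := by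
    have := hf.continuous_iteratedFDeriv (m := n) (mod_cast hn)
    exact Continuous.integrable_of_hasCompactSupport (by fun_prop)
      (hfc.iteratedFDeriv n).norm.mul_left
  have hderiv := VectorFourier.pow_mul_norm_iteratedFDeriv_fourierIntegral_le L (K := 0) (N := N)
    (mod_cast hf) hint (k := 0) le_rfl le_rfl ξ ξ
  simp only [norm_iteratedFDeriv_zero, pow_zero, mul_one, one_mul, Nat.cast_zero, mul_zero,
    zero_add, Finset.range_one, Finset.sum_product, Finset.sum_singleton] at hderiv
  rcases (pow_nonneg (norm_nonneg ξ) N).eq_or_lt with hξ | hξ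
  · rw [mul_pow, ← hξ, mul_zero, zero_mul]
    positivity
  refine le_of_mul_le_mul_left ?_ hξ
  calc ‖ξ‖ ^ N * ((c * ‖ξ‖) ^ N * ‖F‖) = (c * ‖ξ‖ * ‖ξ‖) ^ N * ‖F‖ := by ring
    _ ≤ |L ξ ξ| ^ N * ‖F‖ := by gcongr; exact (hL ξ).trans (le_abs_self _)
    _ ≤ _ := hderiv.trans_eq (mul_assoc _ _ _)

end FourierDecay

section AngularFourier

variable {V : Type*} [NormedAddCommGroup V] [NormedSpace ℝ V]

lemma exp_mul_eq_fourierChar_smul (L : V →L[ℝ] V →L[ℝ] ℝ) (ω v : V) (z : ℂ) :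
    Complex.exp (-(Complex.I * (L v ω : ℂ))) * z =
      𝐞 (-((2 * π)⁻¹ • L).toLinearMap₁₂ v ω) • z := by
  have hphase : ((2 * π * -((2 * π)⁻¹ * L v ω) : ℝ) : ℂ) * Complex.I =
      -(Complex.I * L v ω) := by
    have : (π : ℂ) ≠ 0 := mod_cast pi_ne_zero
    push_cast
    field_simp
  rw [Circle.smul_def, fourierChar_apply, smul_eq_mul, ← hphase]
  simp

variable [MeasureSpace V]

/-- The Fourier transform `ω ↦ ∫ e^{-i L(v, ω)} f(v) dv` with respect to a bilinear form `L`, in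
the normalization without `2π` in the phase. -/
def angularFourier (L : V →L[ℝ] V →L[ℝ] ℝ) (f : V → ℂ) (ω : V) : ℂ :=
  ∫ v, Complex.exp (-(Complex.I * (L v ω : ℂ))) * f v

variable {L : V →L[ℝ] V →L[ℝ] ℝ} {f : V → ℂ}

lemma angularFourier_eq_fourierIntegral (L : V →L[ℝ] V →L[ℝ] ℝ) (f : V → ℂ) :
    angularFourier L f =
      VectorFourier.fourierIntegral 𝐞 volume ((2 * π)⁻¹ • L).toLinearMap₁₂ f :=
  funext fun ω => integral_congr_ae (.of_forall fun v => exp_mul_eq_fourierChar_smul L ω v (f v))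

variable [BorelSpace V]

lemma continuous_angularFourier (hf : Integrable f) : Continuous (angularFourier L f) := by
  rw [angularFourier_eq_fourierIntegral]
  exact VectorFourier.fourierIntegral_continuous continuous_fourierChar
    ((2 * π)⁻¹ • L).continuous₂ hf

lemma integrable_exp_mul (L : V →L[ℝ] V →L[ℝ] ℝ) (hf : Integrable f) (ω : V) :
    Integrable fun v => Complex.exp (-(Complex.I * (L v ω : ℂ))) * f v := by
  simp_rw [exp_mul_eq_fourierChar_smul]
  exact (VectorFourier.fourierIntegral_convergent_iff continuous_fourierChar
    ((2 * π)⁻¹ • L).continuous₂ ω).2 hf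

variable [FiniteDimensional ℝ V] [(volume : Measure V).IsAddHaarMeasure]

lemma exists_pow_mul_norm_angularFourier_le (hL : IsCoercive L) {K : Set V} (hK : IsCompact K)
    (N : ℕ) : ∃ C : ℝ, ∀ (f : V → ℂ) (M : ℕ → ℝ), ContDiff ℝ N f → Function.support f ⊆ K →
      (∀ n v, ‖iteratedFDeriv ℝ n f v‖ ≤ M n) →
      ∀ ω, ‖ω‖ ^ N * ‖angularFourier L f ω‖ ≤ C * ∑ n ∈ Finset.range (N + 1), M n := by
  obtain ⟨c, hc, hcL⟩ := hL
  set c' := (2 * π)⁻¹ * c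
  have hc' : 0 < c' := by positivity
  have hc'L (v : V) : c' * ‖v‖ * ‖v‖ ≤ ((2 * π)⁻¹ • L) v v := by
    calc c' * ‖v‖ * ‖v‖ = (2 * π)⁻¹ * (c * ‖v‖ * ‖v‖) := by ring
      _ ≤ (2 * π)⁻¹ * L v v := by gcongr; exact hcL v
  refine ⟨2 ^ N / c' ^ N * volume.real K, fun f M hf hfK hM ω => ?_⟩
  have hts : tsupport f ⊆ K := closure_minimal hfK hK.isClosed
  have hdecay := mul_norm_pow_mul_norm_fourierIntegral_le (μ := volume) hc'.le hc'L hf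
    (hK.of_isClosed_subset (isClosed_tsupport f) hts) ω
  rw [← angularFourier_eq_fourierIntegral] at hdecay
  have hsum : ∑ n ∈ Finset.range (N + 1), ∫ v, ‖iteratedFDeriv ℝ n f v‖ ≤
      (∑ n ∈ Finset.range (N + 1), M n) * volume.real K := by
    rw [Finset.sum_mul]
    exact Finset.sum_le_sum fun n _ => integral_norm_le_of_support_subset hK.measure_lt_top
      ((support_iteratedFDeriv_subset n).trans hts) (hM n)
  refine le_of_mul_le_mul_left ?_ (pow_pos hc' N)
  calc c' ^ N * (‖ω‖ ^ N * ‖angularFourier L f ω‖)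
      = (c' * ‖ω‖) ^ N * ‖angularFourier L f ω‖ := by ring
    _ ≤ 2 ^ N * ((∑ n ∈ Finset.range (N + 1), M n) * volume.real K) := hdecay.trans (by gcongr)
    _ = c' ^ N * (2 ^ N / c' ^ N * volume.real K * ∑ n ∈ Finset.range (N + 1), M n) := by
      field_simp

end AngularFourier

section FourierLine

variable {E : Type*} [NormedAddCommGroup E] [NormedSpace ℂ E]

lemma one_add_sq_mul_norm_fourierInv_le {f : ℝ → E} (hf : ContDiff ℝ 2 f)
    (hfi : ∀ n : ℕ, n ≤ 2 → Integrable (iteratedDeriv n f)) (t : ℝ) :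
    (1 + (2 * π * t) ^ 2) * ‖𝓕⁻ f t‖ ≤ (∫ η, ‖f η‖) + ∫ η, ‖iteratedDeriv 2 f η‖ := by
  rw [fourierInv_eq_fourier_neg]
  have h0 : ‖𝓕 f (-t)‖ ≤ ∫ η, ‖f η‖ := VectorFourier.norm_fourierIntegral_le_integral_norm ..
  have h2 : ‖𝓕 (iteratedDeriv 2 f) (-t)‖ ≤ ∫ η, ‖iteratedDeriv 2 f η‖ :=
    VectorFourier.norm_fourierIntegral_le_integral_norm ..
  have hnorm : ‖𝓕 (iteratedDeriv 2 f) (-t)‖ = (2 * π * t) ^ 2 * ‖𝓕 f (-t)‖ := by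
    rw [fourier_iteratedDeriv (N := 2) hf (fun n hn => hfi n (mod_cast hn)) le_rfl]
    simp [norm_smul, mul_pow]
  linarith

lemma integral_exp_mul_fourierInv {f : ℝ → ℂ} (hf : Continuous f) (hfi : Integrable f)
    (hinv : Integrable fun x => 𝓕⁻ f (x / (2 * π))) (η : ℝ) :
    ∫ x : ℝ, Complex.exp (-(Complex.I * ((x * η : ℝ) : ℂ))) * 𝓕⁻ f (x / (2 * π)) =
      2 * π * f η := by
  have hinv' : Integrable (𝓕⁻ f) := (integrable_comp_div_iff _ two_pi_pos.ne').1 hinv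
  have hF : Integrable (𝓕 f) := by
    simpa [fourierInv_eq_fourier_neg] using hinv'.comp_neg
  have hcongr (x : ℝ) : Complex.exp (-(Complex.I * ((x * η : ℝ) : ℂ))) * 𝓕⁻ f (x / (2 * π)) =
      Complex.exp (((-2 * π * inner ℝ (x / (2 * π)) η : ℝ) : ℂ) * Complex.I) •
        𝓕⁻ f (x / (2 * π)) := by
    have : (π : ℂ) ≠ 0 := mod_cast pi_ne_zero
    simp only [RCLike.inner_apply, conj_trivial, smul_eq_mul]
    congr 2
    push_cast
    field_simp
  simp_rw [hcongr]
  rw [Measure.integral_comp_div (fun t : ℝ =>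
    Complex.exp (((-2 * π * inner ℝ t η : ℝ) : ℂ) * Complex.I) • 𝓕⁻ f t), ← fourier_eq',
    hf.fourier_fourierInv_eq hfi hF, abs_of_pos two_pi_pos]
  simp

end FourierLine

section Conormal

variable {W : Type*}

/-- The oscillatory integral `(x, w) ↦ ∫ e^{ixη} a(η, w) dη`, conormal to `{x = 0}`. -/
def oscIntegral (a : ℝ × W → ℂ) (y : ℝ × W) : ℂ :=
  ∫ η : ℝ, Complex.exp (Complex.I * ((y.1 * η : ℝ) : ℂ)) * a (η, y.2)

lemma oscIntegral_eq_fourierInv (a : ℝ × W → ℂ) (y : ℝ × W) :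
    oscIntegral a y = 𝓕⁻ (fun η => a (η, y.2)) (y.1 / (2 * π)) := by
  rw [fourierInv_eq']
  refine integral_congr_ae (.of_forall fun η => ?_)
  simp only [smul_eq_mul, RCLike.inner_apply, conj_trivial]
  congr 2
  push_cast
  field_simp

variable [NormedAddCommGroup W] [NormedSpace ℝ W]

/-- The bilinear form `((x, w), (η, ω)) ↦ x η + L(w, ω)` on `ℝ × W`. -/
def linePairing (L : W →L[ℝ] W →L[ℝ] ℝ) : ℝ × W →L[ℝ] ℝ × W →L[ℝ] ℝ :=
  (ContinuousLinearMap.mul ℝ ℝ).bilinearComp (.fst ℝ ℝ W) (.fst ℝ ℝ W) +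
    L.bilinearComp (.snd ℝ ℝ W) (.snd ℝ ℝ W)

variable {L : W →L[ℝ] W →L[ℝ] ℝ}

@[simp]
lemma linePairing_apply (y ζ : ℝ × W) : linePairing L y ζ = y.1 * ζ.1 + L y.2 ζ.2 := rfl

lemma isCoercive_linePairing (hL : IsCoercive L) : IsCoercive (linePairing L) := by
  obtain ⟨c, hc, hcL⟩ := hL
  refine ⟨min c 1, by positivity, fun y => ?_⟩
  have hfst : 0 ≤ y.1 * y.1 := mul_self_nonneg _
  have hsnd : 0 ≤ c * ‖y.2‖ * ‖y.2‖ := by positivity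
  rw [linePairing_apply]
  rcases max_choice ‖y.1‖ ‖y.2‖ with hy | hy <;> rw [Prod.norm_def, hy]
  · calc min c 1 * ‖y.1‖ * ‖y.1‖ ≤ 1 * ‖y.1‖ * ‖y.1‖ := by gcongr; exact min_le_right _ _
      _ = y.1 * y.1 := by rw [one_mul, norm_eq_abs, abs_mul_abs_self]
      _ ≤ y.1 * y.1 + L y.2 y.2 := by linarith [hcL y.2]
  · calc min c 1 * ‖y.2‖ * ‖y.2‖ ≤ c * ‖y.2‖ * ‖y.2‖ := by gcongr; exact min_le_left _ _
      _ ≤ y.1 * y.1 + L y.2 y.2 := by linarith [hcL y.2]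

lemma angularFourier_oscIntegral [MeasureSpace W] [BorelSpace W] [SFinite (volume : Measure W)]
    {a : ℝ × W → ℂ} (hac : ∀ w, Continuous fun η => a (η, w))
    (hai : ∀ w, Integrable fun η => a (η, w)) (hu : Integrable (oscIntegral a)) (ζ : ℝ × W) :
    angularFourier (linePairing L) (oscIntegral a) ζ =
      2 * π * angularFourier L (fun w => a (ζ.1, w)) ζ.2 := by
  have hfubini := integral_prod_symm (μ := (volume : Measure ℝ)) (ν := (volume : Measure W)) _
    (integrable_exp_mul (linePairing L) hu ζ)
  refine hfubini.trans ?_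
  rw [angularFourier, ← integral_const_mul]
  refine integral_congr_ae ?_
  filter_upwards [hu.prod_left_ae] with w hw
  simp_rw [oscIntegral_eq_fourierInv] at hw ⊢
  calc ∫ x : ℝ, Complex.exp (-(Complex.I * (linePairing L (x, w) ζ : ℂ))) *
        𝓕⁻ (fun η => a (η, w)) (x / (2 * π))
      = ∫ x : ℝ, Complex.exp (-(Complex.I * (L w ζ.2 : ℂ))) *
          (Complex.exp (-(Complex.I * ((x * ζ.1 : ℝ) : ℂ))) *
            𝓕⁻ (fun η => a (η, w)) (x / (2 * π))) := by
        refine integral_congr_ae (.of_forall fun x => ?_)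
        simp only [← mul_assoc, ← Complex.exp_add, linePairing_apply]
        congr 2
        push_cast
        ring
    _ = 2 * π * (Complex.exp (-(Complex.I * (L w ζ.2 : ℂ))) * a (ζ.1, w)) := by
        rw [integral_const_mul, integral_exp_mul_fourierInv (hac w) (hai w) hw]
        ring

end Conormal

section Amplitude

variable {W : Type*} [NormedAddCommGroup W] [NormedSpace ℝ W]

/-- Amplitudes `a(η, w)` of order `m` supported over the parameter set `K`. Of the estimates
defining a symbol only the pure derivatives are required, and only the first two of them in `η`. -/
structure IsAmplitude (m : ℝ) (K : Set W) (a : ℝ × W → ℂ) : Prop where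
  continuous : Continuous a
  contDiff_freq : ∀ w, ContDiff ℝ 2 fun η => a (η, w)
  contDiff_param : ∀ (n : ℕ) (η : ℝ), ContDiff ℝ n fun w => a (η, w)
  exists_norm_iteratedDeriv_le : ∀ n : ℕ, n ≤ 2 → ∃ C : ℝ, ∀ η w,
    ‖iteratedDeriv n (fun η' => a (η', w)) η‖ ≤ C * (1 + ‖η‖) ^ m
  exists_norm_iteratedFDeriv_le : ∀ n : ℕ, ∃ C : ℝ, ∀ η w,
    ‖iteratedFDeriv ℝ n (fun w' => a (η, w')) w‖ ≤ C * (1 + ‖η‖) ^ m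
  eq_zero_of_notMem : ∀ η, ∀ w ∉ K, a (η, w) = 0

namespace IsAmplitude

variable {m : ℝ} {K : Set W} {a : ℝ × W → ℂ}

lemma integrable_iteratedDeriv (ha : IsAmplitude m K a) (hm : m < -1) {n : ℕ} (hn : n ≤ 2)
    (w : W) : Integrable (iteratedDeriv n fun η => a (η, w)) := by
  obtain ⟨C, hC⟩ := ha.exists_norm_iteratedDeriv_le n hn
  exact ((integrable_one_add_norm_rpow_real hm).const_mul C).mono'
    ((ha.contDiff_freq w).continuous_iteratedDeriv n (mod_cast hn)).aestronglyMeasurable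
    (.of_forall fun η => hC η w)

lemma exists_integral_norm_iteratedDeriv_le (ha : IsAmplitude m K a) (hm : m < -1) {n : ℕ}
    (hn : n ≤ 2) : ∃ C : ℝ, ∀ w, ∫ η, ‖iteratedDeriv n (fun η' => a (η', w)) η‖ ≤ C := by
  obtain ⟨C, hC⟩ := ha.exists_norm_iteratedDeriv_le n hn
  exact ⟨∫ η : ℝ, C * (1 + ‖η‖) ^ m, fun w => integral_mono
    (ha.integrable_iteratedDeriv hm hn w).norm ((integrable_one_add_norm_rpow_real hm).const_mul C)
    fun η => hC η w⟩

lemma exists_norm_oscIntegral_le (ha : IsAmplitude m K a) (hm : m < -1) :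
    ∃ C : ℝ, ∀ y, ‖oscIntegral a y‖ ≤
      C * ((1 + ‖y.1‖) ^ (-2 : ℝ) * K.indicator (1 : W → ℝ) y.2) := by
  obtain ⟨C₀, hC₀⟩ := ha.exists_integral_norm_iteratedDeriv_le hm zero_le_two
  obtain ⟨C₂, hC₂⟩ := ha.exists_integral_norm_iteratedDeriv_le hm le_rfl
  refine ⟨2 * (C₀ + C₂), fun ⟨x, w⟩ => ?_⟩
  by_cases hw : w ∈ K
  · have hdecay := one_add_sq_mul_norm_fourierInv_le (ha.contDiff_freq w)
      (fun n hn => ha.integrable_iteratedDeriv hm hn w) (x / (2 * π))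
    rw [← oscIntegral_eq_fourierInv a (x, w), mul_div_cancel₀ _ two_pi_pos.ne'] at hdecay
    have hbracket : (1 + ‖x‖) ^ 2 ≤ 2 * (1 + x ^ 2) := by
      rw [norm_eq_abs]
      nlinarith [sq_nonneg (|x| - 1), sq_abs x]
    rw [Set.indicator_of_mem hw, Pi.one_apply, mul_one, rpow_neg (by positivity), rpow_two,
      ← div_eq_mul_inv, le_div_iff₀' (by positivity)]
    calc (1 + ‖x‖) ^ 2 * ‖oscIntegral a (x, w)‖
        ≤ 2 * (1 + x ^ 2) * ‖oscIntegral a (x, w)‖ := by gcongr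
      _ = 2 * ((1 + x ^ 2) * ‖oscIntegral a (x, w)‖) := mul_assoc ..
      _ ≤ 2 * (C₀ + C₂) := by gcongr; exact hdecay.trans (add_le_add (hC₀ w) (hC₂ w))
  · simp [oscIntegral, ha.eq_zero_of_notMem _ w hw, hw]

lemma continuous_oscIntegral (ha : IsAmplitude m K a) (hm : m < -1) :
    Continuous (oscIntegral a) := by
  obtain ⟨C, hC⟩ := ha.exists_norm_iteratedDeriv_le 0 zero_le_two
  have hcont := ha.continuous
  refine continuous_of_dominated (bound := fun η => C * (1 + ‖η‖) ^ m)
    (fun y => Continuous.aestronglyMeasurable (by fun_prop)) (fun y => .of_forall fun η => ?_)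
    ((integrable_one_add_norm_rpow_real hm).const_mul C) (.of_forall fun η => by fun_prop)
  rw [norm_mul, Complex.norm_exp_I_mul_ofReal, one_mul]
  exact hC η y.2

variable [FiniteDimensional ℝ W] [MeasureSpace W] [BorelSpace W]
  [(volume : Measure W).IsAddHaarMeasure]

lemma integrable_oscIntegral (ha : IsAmplitude m K a) (hm : m < -1) (hK : IsCompact K) :
    Integrable (oscIntegral a) := by
  obtain ⟨C, hC⟩ := ha.exists_norm_oscIntegral_le hm
  have hKi : Integrable (K.indicator (1 : W → ℝ)) :=
    (integrable_indicator_iff hK.measurableSet).2 (integrableOn_const hK.measure_ne_top)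
  exact (((integrable_one_add_norm_rpow_real (by norm_num)).mul_prod hKi).const_mul C).mono'
    (ha.continuous_oscIntegral hm).aestronglyMeasurable (.of_forall hC)

lemma memLp_two_oscIntegral (ha : IsAmplitude m K a) (hm : m < -1) (hK : IsCompact K) :
    MemLp (oscIntegral a) 2 volume := by
  obtain ⟨C, hC⟩ := ha.exists_norm_oscIntegral_le hm
  have hKp : MemLp (K.indicator (1 : W → ℝ)) 2 volume :=
    memLp_indicator_const 2 hK.measurableSet 1 (.inr hK.measure_ne_top)
  have hbracket : MemLp (fun x : ℝ => (1 + ‖x‖) ^ (-2 : ℝ)) 2 volume :=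
    memLp_two_one_add_norm_rpow (by norm_num)
  refine (memLp_two_mul_prod hbracket hKp).of_le_mul (c := C)
    (ha.continuous_oscIntegral hm).aestronglyMeasurable (.of_forall fun y => ?_)
  rw [norm_of_nonneg (mul_nonneg (by positivity) (Set.indicator_nonneg (by simp) _))]
  exact hC y

variable {L : W →L[ℝ] W →L[ℝ] ℝ}

lemma exists_pow_mul_norm_angularFourier_le (ha : IsAmplitude m K a) (hK : IsCompact K)
    (hL : IsCoercive L) (N : ℕ) : ∃ C : ℝ, ∀ η ω,
      ‖ω‖ ^ N * ‖angularFourier L (fun w => a (η, w)) ω‖ ≤ C * (1 + ‖η‖) ^ m := by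
  obtain ⟨C, hC⟩ := _root_.exists_pow_mul_norm_angularFourier_le hL hK N
  choose B hB using ha.exists_norm_iteratedFDeriv_le
  refine ⟨C * ∑ n ∈ Finset.range (N + 1), B n, fun η ω => ?_⟩
  have hsupp : Function.support (fun w => a (η, w)) ⊆ K := fun w hw => by
    contrapose! hw
    simpa using ha.eq_zero_of_notMem η w hw
  have hdecay := hC _ (fun n => B n * (1 + ‖η‖) ^ m) (ha.contDiff_param N η) hsupp
    (fun n w => hB n η w) ω
  rwa [← Finset.sum_mul, ← mul_assoc] at hdecay

lemma exists_norm_angularFourier_le (ha : IsAmplitude m K a) (hK : IsCompact K)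
    (hL : IsCoercive L) (t : ℝ) : ∃ C : ℝ, ∀ η ω,
      ‖angularFourier L (fun w => a (η, w)) ω‖ ≤ C * ((1 + ‖η‖) ^ m * (1 + ‖ω‖) ^ t) := by
  obtain ⟨N, hN⟩ := exists_nat_ge (-t)
  obtain ⟨C₀, hC₀⟩ := ha.exists_pow_mul_norm_angularFourier_le hK hL 0
  obtain ⟨C₁, hC₁⟩ := ha.exists_pow_mul_norm_angularFourier_le hK hL N
  refine ⟨2 ^ (N - 1) * (C₀ + C₁), fun η ω => ?_⟩
  set A := ‖angularFourier L (fun w => a (η, w)) ω‖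
  have h₀ : A ≤ C₀ * (1 + ‖η‖) ^ m := by simpa [A] using hC₀ η ω
  have hpow : (1 + ‖ω‖) ^ N ≤ 2 ^ (N - 1) * (1 + ‖ω‖ ^ N) := by
    simpa using add_pow_le zero_le_one (norm_nonneg ω) N
  have hsum : A + ‖ω‖ ^ N * A ≤ (C₀ + C₁) * (1 + ‖η‖) ^ m :=
    (add_le_add h₀ (hC₁ η ω)).trans_eq (add_mul ..).symm
  have hbracket : 1 ≤ (1 + ‖ω‖) ^ t * (1 + ‖ω‖) ^ N := by
    rw [← rpow_natCast, ← rpow_add (by positivity)]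
    exact one_le_rpow (by simp) (by linarith)
  calc A ≤ (1 + ‖ω‖) ^ t * (1 + ‖ω‖) ^ N * A := le_mul_of_one_le_left (norm_nonneg _) hbracket
    _ ≤ (1 + ‖ω‖) ^ t * (2 ^ (N - 1) * (1 + ‖ω‖ ^ N)) * A := by gcongr
    _ = (1 + ‖ω‖) ^ t * (2 ^ (N - 1) * (A + ‖ω‖ ^ N * A)) := by ring
    _ ≤ (1 + ‖ω‖) ^ t * (2 ^ (N - 1) * ((C₀ + C₁) * (1 + ‖η‖) ^ m)) := by gcongr
    _ = 2 ^ (N - 1) * (C₀ + C₁) * ((1 + ‖η‖) ^ m * (1 + ‖ω‖) ^ t) := by ring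

theorem memLp_weight_smul_angularFourier (ha : IsAmplitude m K a) (hm : m < -1)
    (hK : IsCompact K) (hL : IsCoercive L) {s : ℝ} (hs : s + m < -1 / 2) (t : ℝ) :
    MemLp (fun ζ : ℝ × W => ((1 + ‖ζ.1‖) ^ s * (1 + ‖ζ.2‖) ^ t) •
      angularFourier (linePairing L) (oscIntegral a) ζ) 2 volume := by
  set D := (finrank ℝ W : ℝ)
  obtain ⟨C, hC⟩ := ha.exists_norm_angularFourier_le hK hL (-t - (D + 1))
  have hline : MemLp (fun η : ℝ => (1 + ‖η‖) ^ (s + m)) 2 volume :=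
    memLp_two_one_add_norm_rpow (by rw [finrank_self, Nat.cast_one]; linarith)
  have hparam : MemLp (fun ω : W => (1 + ‖ω‖) ^ (-(D + 1))) 2 volume :=
    memLp_two_one_add_norm_rpow (by linarith [Nat.cast_nonneg (α := ℝ) (finrank ℝ W)])
  have hu := ha.integrable_oscIntegral hm hK
  have hcont : Continuous fun ζ : ℝ × W => ((1 + ‖ζ.1‖) ^ s * (1 + ‖ζ.2‖) ^ t) •
      angularFourier (linePairing L) (oscIntegral a) ζ :=
    (((continuous_one_add_norm_rpow s).comp continuous_fst).mul
      ((continuous_one_add_norm_rpow t).comp continuous_snd)).smul (continuous_angularFourier hu)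
  refine (memLp_two_mul_prod hline hparam).of_le_mul (c := 2 * π * C) hcont.aestronglyMeasurable
    (.of_forall fun ⟨η, ω⟩ => ?_)
  have hη : 0 < 1 + ‖η‖ := by positivity
  have hω : 0 < 1 + ‖ω‖ := by positivity
  dsimp only
  rw [norm_smul, norm_of_nonneg (by positivity : 0 ≤ (1 + ‖η‖) ^ s * (1 + ‖ω‖) ^ t),
    norm_of_nonneg (by positivity : 0 ≤ (1 + ‖η‖) ^ (s + m) * (1 + ‖ω‖) ^ (-(D + 1))),
    angularFourier_oscIntegral (fun w => (ha.contDiff_freq w).continuous)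
      (fun w => by simpa using ha.integrable_iteratedDeriv hm zero_le_two w) hu,
    norm_mul, show ‖(2 * π : ℂ)‖ = 2 * π by simp [pi_nonneg]]
  calc (1 + ‖η‖) ^ s * (1 + ‖ω‖) ^ t *
        (2 * π * ‖angularFourier L (fun w => a (η, w)) ω‖)
      ≤ (1 + ‖η‖) ^ s * (1 + ‖ω‖) ^ t *
        (2 * π * (C * ((1 + ‖η‖) ^ m * (1 + ‖ω‖) ^ (-t - (D + 1))))) := by gcongr; exact hC η ω
    _ = 2 * π * C * (((1 + ‖η‖) ^ s * (1 + ‖η‖) ^ m) *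
        ((1 + ‖ω‖) ^ t * (1 + ‖ω‖) ^ (-t - (D + 1)))) := by ring
    _ = 2 * π * C * ((1 + ‖η‖) ^ (s + m) * (1 + ‖ω‖) ^ (-(D + 1))) := by
      rw [← rpow_add hη, ← rpow_add hω]
      ring_nf

end IsAmplitude

end Amplitude

section Weights

lemma rpow_le_rpow_abs_mul_rpow {x y c : ℝ} (hx : 0 < x) (hy : 0 < y) (hxy : x ≤ c * y)
    (hyx : y ≤ c * x) (s : ℝ) : x ^ s ≤ c ^ |s| * y ^ s := by
  have hc : 0 < c := pos_of_mul_pos_left (hx.trans_le hxy) hy.le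
  rcases le_total 0 s with hs | hs
  · rw [abs_of_nonneg hs, ← mul_rpow hc.le hy.le]
    exact rpow_le_rpow hx.le hxy hs
  · rw [abs_of_nonpos hs, rpow_neg hc.le, ← inv_rpow hc.le, ← mul_rpow (by positivity) hy.le]
    exact rpow_le_rpow_of_nonpos (by positivity) ((inv_mul_le_iff₀ hc).2 hyx) hs

lemma one_add_sq_add_rpow_le {x q b : ℝ} (hb : 0 ≤ b) (hq : 0 ≤ q) (hqb : q ≤ 3 * b ^ 2) (s : ℝ) :
    (1 + x ^ 2 + q) ^ (s / 2) ≤ (2 * (1 + b)) ^ |s| * (1 + ‖x‖) ^ s := by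
  have hx : 0 ≤ ‖x‖ := norm_nonneg x
  have hsq : x ^ 2 = ‖x‖ ^ 2 := (sq_abs x).symm
  rw [rpow_div_two_eq_sqrt s (by positivity), hsq]
  refine rpow_le_rpow_abs_mul_rpow (by positivity) (by positivity) ?_ ?_ s
  · rw [sqrt_le_left (by positivity)]
    nlinarith [mul_nonneg hb hx, mul_nonneg (mul_nonneg hb hx) hx, mul_nonneg (sq_nonneg b) hx,
      sq_nonneg (b * ‖x‖)]
  · calc 1 + ‖x‖ ≤ 2 * √(1 + ‖x‖ ^ 2 + q) := by
          rw [← div_le_iff₀' two_pos]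
          refine le_sqrt_of_sq_le ?_
          nlinarith [sq_nonneg (‖x‖ - 1)]
      _ ≤ 2 * (1 + b) * √(1 + ‖x‖ ^ 2 + q) := by gcongr; linarith

lemma anisotropic_weight_le (d : ℕ) (κ r k₂ k₃ : ℝ) (ζ : Sp d) :
    (1 + ζ.1 ^ 2 + ‖ζ.2.2.2‖ ^ 2) ^ (κ / 2) *
      (1 + ζ.2.1 ^ 2 + ‖ζ.2.2.2‖ ^ 2) ^ (k₂ / 2) *
      (1 + ζ.2.2.1 ^ 2 + ‖ζ.2.2.2‖ ^ 2) ^ (k₃ / 2) *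
      (1 + ζ.1 ^ 2 + ζ.2.1 ^ 2 + ζ.2.2.1 ^ 2 + ‖ζ.2.2.2‖ ^ 2) ^ (r / 2) ≤
    2 ^ (|κ| + |k₂| + |k₃| + |r|) *
      ((1 + ‖ζ.1‖) ^ (κ + r) * (1 + ‖ζ.2‖) ^ (|κ| + |k₂| + |k₃| + |r|)) := by
  obtain ⟨x, ω⟩ := ζ
  have hω := norm_nonneg ω
  have hω₂ := sq_nonneg ‖ω‖
  have h₁ : ω.1 ^ 2 ≤ ‖ω‖ ^ 2 := by
    simpa using pow_le_pow_left₀ (norm_nonneg _) (norm_fst_le ω) 2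
  have h₂ : ω.2.1 ^ 2 ≤ ‖ω‖ ^ 2 := by
    simpa using pow_le_pow_left₀ (norm_nonneg _) ((norm_fst_le ω.2).trans (norm_snd_le ω)) 2
  have h₃ : ‖ω.2.2‖ ^ 2 ≤ ‖ω‖ ^ 2 := by gcongr; exact (norm_snd_le _).trans (norm_snd_le _)
  have hκ : (1 + x ^ 2 + ‖ω.2.2‖ ^ 2) ^ (κ / 2) ≤ (2 * (1 + ‖ω‖)) ^ |κ| * (1 + ‖x‖) ^ κ :=
    one_add_sq_add_rpow_le hω (by positivity) (by linarith) κ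
  have hk₂ : (1 + ω.1 ^ 2 + ‖ω.2.2‖ ^ 2) ^ (k₂ / 2) ≤ (2 * (1 + ‖ω‖)) ^ |k₂| := by
    simpa [add_assoc] using one_add_sq_add_rpow_le (x := 0) (q := ω.1 ^ 2 + ‖ω.2.2‖ ^ 2) hω
      (by positivity) (by linarith) k₂
  have hk₃ : (1 + ω.2.1 ^ 2 + ‖ω.2.2‖ ^ 2) ^ (k₃ / 2) ≤ (2 * (1 + ‖ω‖)) ^ |k₃| := by
    simpa [add_assoc] using one_add_sq_add_rpow_le (x := 0) (q := ω.2.1 ^ 2 + ‖ω.2.2‖ ^ 2) hω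
      (by positivity) (by linarith) k₃
  have hr : (1 + x ^ 2 + ω.1 ^ 2 + ω.2.1 ^ 2 + ‖ω.2.2‖ ^ 2) ^ (r / 2) ≤
      (2 * (1 + ‖ω‖)) ^ |r| * (1 + ‖x‖) ^ r := by
    have h := one_add_sq_add_rpow_le (x := x) (q := ω.1 ^ 2 + ω.2.1 ^ 2 + ‖ω.2.2‖ ^ 2) hω
      (by positivity) (by linarith) r
    rwa [← add_assoc, ← add_assoc] at h
  have hT : 0 < 2 * (1 + ‖ω‖) := by positivity
  calc _ ≤ (2 * (1 + ‖ω‖)) ^ |κ| * (1 + ‖x‖) ^ κ * (2 * (1 + ‖ω‖)) ^ |k₂| *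
        (2 * (1 + ‖ω‖)) ^ |k₃| * ((2 * (1 + ‖ω‖)) ^ |r| * (1 + ‖x‖) ^ r) := by gcongr
    _ = (2 * (1 + ‖ω‖)) ^ (|κ| + |k₂| + |k₃| + |r|) * (1 + ‖x‖) ^ (κ + r) := by
      rw [rpow_add hT, rpow_add hT, rpow_add hT, rpow_add (by positivity : 0 < 1 + ‖x‖)]
      ring
    _ = _ := by
      rw [mul_rpow two_pos.le (by positivity)]
      ring

end Weights

section ModelSpace

/-- The Euclidean pairing on `Par d`, the last `n - 1` of the `n` variables. -/
def parPairing (d : ℕ) : Par d →L[ℝ] Par d →L[ℝ] ℝ := linePairing (linePairing (innerSL ℝ))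

lemma isCoercive_parPairing (d : ℕ) : IsCoercive (parPairing d) :=
  isCoercive_linePairing <| isCoercive_linePairing
    ⟨1, one_pos, fun u => by rw [one_mul, innerSL_apply_apply, real_inner_self_eq_norm_mul_norm]⟩

lemma FT_eq_angularFourier (d : ℕ) (v : Sp d → ℂ) :
    FT d v = angularFourier (linePairing (parPairing d)) v := by
  have hpairing (y ζ : Sp d) : pairing d y ζ = linePairing (parPairing d) y ζ := by
    simp only [pairing, add_assoc]
    rfl
  ext ζ
  simp only [FT, angularFourier, hpairing]

lemma IsSymbolP.isAmplitude {d : ℕ} {m : ℝ} {a : ℝ × Par d → ℂ} (ha : IsSymbolP d m a)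
    {K : Set (Par d)} (hK : ∀ (η : ℝ) (w : Par d), w ∉ K → a (η, w) = 0) :
    IsAmplitude m K a where
  continuous := ha.1.continuous
  contDiff_freq w := (contDiff_infty.1 ha.1 2).comp (by fun_prop)
  contDiff_param n η := (contDiff_infty.1 ha.1 n).comp (by fun_prop)
  exists_norm_iteratedDeriv_le n _ := by
    obtain ⟨C, hC⟩ := ha.2 0 n
    simp only [norm_iteratedFDeriv_zero] at hC
    refine ⟨C, fun η w => (hC η w).trans ?_⟩
    have hC₀ : 0 ≤ C :=
      nonneg_of_mul_nonneg_left ((norm_nonneg _).trans (hC η w)) (by positivity)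
    exact mul_le_mul_of_nonneg_left (rpow_le_rpow_of_exponent_le (by simp) (by simp)) hC₀
  exists_norm_iteratedFDeriv_le n := by simpa using ha.2 n 0
  eq_zero_of_notMem := hK

instance {V W : Type*} [NormedAddCommGroup V] [NormedAddCommGroup W] [MeasureSpace V]
    [MeasureSpace W] [BorelSpace V] [BorelSpace W] [ProperSpace V] [ProperSpace W]
    [(volume : Measure V).IsAddHaarMeasure] [(volume : Measure W).IsAddHaarMeasure] :
    (volume : Measure (V × W)).IsAddHaarMeasure :=
  Measure.prod.instIsAddHaarMeasure _ _

lemma memLp_anisotropic_weight_smul_FT {d : ℕ} {m : ℝ} (hm : m < -1) {a : ℝ × Par d → ℂ}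
    {K : Set (Par d)} (ha : IsAmplitude m K a) (hK : IsCompact K) {κ r : ℝ}
    (hκr : κ + r < -m - 1 / 2) (k₂ k₃ : ℝ) :
    MemLp (fun ζ : Sp d =>
      ((1 + ζ.1 ^ 2 + ‖ζ.2.2.2‖ ^ 2) ^ (κ / 2) *
       (1 + ζ.2.1 ^ 2 + ‖ζ.2.2.2‖ ^ 2) ^ (k₂ / 2) *
       (1 + ζ.2.2.1 ^ 2 + ‖ζ.2.2.2‖ ^ 2) ^ (k₃ / 2) *
       (1 + ζ.1 ^ 2 + ζ.2.1 ^ 2 + ζ.2.2.1 ^ 2 + ‖ζ.2.2.2‖ ^ 2) ^ (r / 2)) •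
        FT d (v1 d a) ζ) 2 volume := by
  have hmodel := ha.memLp_weight_smul_angularFourier hm hK (isCoercive_parPairing d)
    (s := κ + r) (by linarith) (|κ| + |k₂| + |k₃| + |r|)
  have hFT := (continuous_angularFourier (L := linePairing (parPairing d))
    (ha.integrable_oscIntegral hm hK)).measurable
  rw [FT_eq_angularFourier]
  change MemLp (fun ζ => _ • angularFourier _ (oscIntegral a) ζ) 2 volume
  refine hmodel.of_le_mul (c := 2 ^ (|κ| + |k₂| + |k₃| + |r|))
    (Measurable.aestronglyMeasurable (by fun_prop)) (.of_forall fun ζ => ?_)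
  rw [norm_smul, norm_smul, norm_of_nonneg (by positivity), norm_of_nonneg (by positivity),
    ← mul_assoc]
  exact mul_le_mul_of_nonneg_right (anisotropic_weight_le d κ r k₂ k₃ ζ) (norm_nonneg _)

end ModelSpace

theorem stmt_14_general (d : ℕ) (m : ℝ) (hm : m < -1)
    (a : ℝ × Par d → ℂ) (ha : IsSymbolP d m a)
    (hsupp : ∃ K : Set (Par d), IsCompact K ∧ ∀ (η : ℝ) (w : Par d), w ∉ K → a (η, w) = 0) :
    MemLp (v1 d a) 2 volume ∧
    (∀ κ r k₂ k₃ : ℝ, κ + r < -m - 1 / 2 →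
      MemLp (fun ζ : Sp d =>
        ((1 + ζ.1 ^ 2 + ‖ζ.2.2.2‖ ^ 2) ^ (κ / 2) *
         (1 + ζ.2.1 ^ 2 + ‖ζ.2.2.2‖ ^ 2) ^ (k₂ / 2) *
         (1 + ζ.2.2.1 ^ 2 + ‖ζ.2.2.2‖ ^ 2) ^ (k₃ / 2) *
         (1 + ζ.1 ^ 2 + ζ.2.1 ^ 2 + ζ.2.2.1 ^ 2 + ‖ζ.2.2.2‖ ^ 2) ^ (r / 2)) •
          FT d (v1 d a) ζ) 2 volume) ∧
    (∀ s : ℝ, s < -m - 1 / 2 →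
      MemLp (fun ζ : Sp d =>
        ((1 + ζ.1 ^ 2 + ζ.2.1 ^ 2 + ζ.2.2.1 ^ 2 + ‖ζ.2.2.2‖ ^ 2) ^ (s / 2)) •
          FT d (v1 d a) ζ) 2 volume) := by
  obtain ⟨K, hK, haK⟩ := hsupp
  have hamp := ha.isAmplitude haK
  refine ⟨hamp.memLp_two_oscIntegral hm hK, fun κ r k₂ k₃ hκr =>
    memLp_anisotropic_weight_smul_FT hm hamp hK hκr k₂ k₃, fun s hs => ?_⟩
  simpa using memLp_anisotropic_weight_smul_FT hm hamp hK (κ := 0) (r := s) (by linarith) 0 0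

/-- **Local-model form of Proposition 5.19:** a distribution conormal to the
hypersurface `{y₁ = 0}` with elliptic-order-`m` symbol, compactly supported in
the parameters, lies in `L²`, in the anisotropic weighted spaces
`H^{r,κ,k₂,k₃}` for `κ + r < -m - 1/2` and arbitrary `k₂, k₃ ≥ 0`, and in the
Sobolev space `H^s` for `0 ≤ s < -m - 1/2`. -/
theorem stmt_14 (d : ℕ) (m : ℝ) (hm : m < -1)
    (a : ℝ × Par d → ℂ) (ha : IsSymbolP d m a)
    (hsupp : ∃ K : Set (Par d), IsCompact K ∧ ∀ (η : ℝ) (w : Par d), w ∉ K → a (η, w) = 0) :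
    MemLp (v1 d a) 2 volume ∧
    (∀ κ r k₂ k₃ : ℝ, 0 ≤ κ → 0 ≤ r → κ + r < -m - 1/2 → 0 ≤ k₂ → 0 ≤ k₃ →
      MemLp (fun ζ : Sp d =>
        ((1 + ζ.1 ^ 2 + ‖ζ.2.2.2‖ ^ 2) ^ (κ / 2) *
         (1 + ζ.2.1 ^ 2 + ‖ζ.2.2.2‖ ^ 2) ^ (k₂ / 2) *
         (1 + ζ.2.2.1 ^ 2 + ‖ζ.2.2.2‖ ^ 2) ^ (k₃ / 2) *
         (1 + ζ.1 ^ 2 + ζ.2.1 ^ 2 + ζ.2.2.1 ^ 2 + ‖ζ.2.2.2‖ ^ 2) ^ (r / 2)) •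
          FT d (v1 d a) ζ) 2 volume) ∧
    (∀ s : ℝ, 0 ≤ s → s < -m - 1/2 →
      MemLp (fun ζ : Sp d =>
        ((1 + ζ.1 ^ 2 + ζ.2.1 ^ 2 + ζ.2.2.1 ^ 2 + ‖ζ.2.2.2‖ ^ 2) ^ (s / 2)) •
          FT d (v1 d a) ζ) 2 volume) := by
  obtain ⟨hL2, haniso, hsob⟩ := stmt_14_general d m hm a ha hsupp
  exact ⟨hL2, fun κ r k₂ k₃ _ _ hκr _ _ => haniso κ r k₂ k₃ hκr, fun s _ => hsob s⟩
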